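/- arXiv:2209.10881 — 2 statements merged into one kernel-verified Lean document; each statement's English description precedes it below -/
import Mathlib

section
/- Let X be a real m×n matrix, W a real m×r matrix and H a real r×n matrix with X = W·H, and let λ > 0 be a real scalar. If H has rank r (full row rank), then Xᵀ·X = λ·Hᵀ·H if and only if Wᵀ·W = λ·I_r, where I_r is the r×r identity matrix. (Theorem 2 of the paper.) -/
open Matrix

section Cancellation

variable {l m n R : Type*} [Fintype m]

theorem mul_left_injective_of_linearIndependent_row [Semiring R] {A : Matrix m n R}
    (hA : LinearIndependent R A.row) : Function.Injective fun M : Matrix l m R ↦ M * A := by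
  cases isEmpty_or_nonempty l
  · exact Function.injective_of_subsingleton _
  · exact mul_left_injective_iff_vecMul_injective.mpr (vecMul_injective_iff.mpr hA)

theorem transpose_mul_right_injective_of_linearIndependent_row [CommSemiring R]
    {A : Matrix m n R} (hA : LinearIndependent R A.row) :
    Function.Injective fun M : Matrix m l R ↦ Aᵀ * M := by
  intro M N h
  have hT : Mᵀ * A = Nᵀ * A := by
    simpa only [transpose_mul, transpose_transpose] using congrArg transpose h
  exact transpose_injective (mul_left_injective_of_linearIndependent_row hA hT)

theorem transpose_mul_mul_inj_of_linearIndependent_row [CommSemiring R] {A : Matrix m n R}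
    (hA : LinearIndependent R A.row) {M N : Matrix m m R} :
    Aᵀ * M * A = Aᵀ * N * A ↔ M = N :=
  (mul_left_injective_of_linearIndependent_row hA).eq_iff.trans
    (transpose_mul_right_injective_of_linearIndependent_row hA).eq_iff

end Cancellation

theorem linearIndependent_row_iff_rank_eq_card {m n K : Type*} [Fintype m] [Fintype n] [Field K]
    {A : Matrix m n K} : LinearIndependent K A.row ↔ A.rank = Fintype.card m := by
  rw [linearIndependent_iff_card_eq_finrank_span, rank_eq_finrank_span_row, Set.finrank, eq_comm]

theorem dspnmf_theorem2_general {m n r R : Type*} [Fintype m] [Fintype r] [DecidableEq r]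
    [CommSemiring R] {X : Matrix m n R} {W : Matrix m r R} {H : Matrix r n R} (c : R)
    (hX : X = W * H) (hH : LinearIndependent R H.row) :
    Xᵀ * X = c • (Hᵀ * H) ↔ Wᵀ * W = c • (1 : Matrix r r R) := by
  have gram_eq : Xᵀ * X = Hᵀ * (Wᵀ * W) * H := by
    simp only [hX, transpose_mul, Matrix.mul_assoc]
  have smul_eq : c • (Hᵀ * H) = Hᵀ * (c • (1 : Matrix r r R)) * H := by
    rw [Matrix.mul_smul, Matrix.mul_one, Matrix.smul_mul]
  rw [gram_eq, smul_eq, transpose_mul_mul_inj_of_linearIndependent_row hH]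

/-- Theorem 2 of the paper: for `X = W * H` with `H` of full row rank `r` and `λ > 0`,
`Xᵀ * X = λ • (Hᵀ * H)` iff `Wᵀ * W = λ • I_r`. -/
theorem dspnmf_theorem2 {m n r : ℕ}
    (X : Matrix (Fin m) (Fin n) ℝ) (W : Matrix (Fin m) (Fin r) ℝ)
    (H : Matrix (Fin r) (Fin n) ℝ) (lam : ℝ) (hlam : 0 < lam)
    (hX : X = W * H) (hrank : H.rank = r) :
    Xᵀ * X = lam • (Hᵀ * H) ↔ Wᵀ * W = lam • (1 : Matrix (Fin r) (Fin r) ℝ) := by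
  have hH : LinearIndependent ℝ H.row :=
    linearIndependent_row_iff_rank_eq_card.mpr (by rw [hrank, Fintype.card_fin])
  exact dspnmf_theorem2_general lam hX hH
end

section
/- Let X ∈ ℝ^{m×n}, W ∈ ℝ^{m×r}, H ∈ ℝ^{r×n} be matrices with strictly positive entries. Define W′ entrywise by W′_{ab} = W_{ab} · (X·Hᵀ)_{ab} / (W·H·Hᵀ)_{ab}. Then ‖X − W′·H‖²_F ≤ ‖X − W·H‖²_F, i.e. the Frobenius reconstruction error is non-increasing under the multiplicative update of the basis matrix W. -/
open Matrix

/-- Squared Frobenius norm of a real matrix. -/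
noncomputable def frobSq {m n : ℕ} (A : Matrix (Fin m) (Fin n) ℝ) : ℝ :=
  ∑ i, ∑ j, (A i j) ^ 2

/-!
The error splits into rows, and for a row `x` of `X` the map `w ↦ ‖x - wH‖²` is, up to a constant,
the quadratic `wᵀAw - 2bᵀw` with `A = HHᵀ` symmetric and entrywise nonnegative and `b = Hx`.
Its quadratic part is majorized at `w` by a diagonal form (Lee–Seung), and the multiplicative update
minimizes the resulting separable upper bound.
-/

section QuadraticObjective

variable {ι R : Type*} [Fintype ι] [CommRing R]

/-- The quadratic objective `wᵀAw - 2bᵀw`, whose stationarity equation for symmetric `A` is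
`Aw = b`; least-squares errors have this form up to an additive constant. -/
def quadObjective (A : Matrix ι ι R) (b w : ι → R) : R :=
  w ⬝ᵥ A *ᵥ w - 2 * (b ⬝ᵥ w)

theorem quadObjective_add {A : Matrix ι ι R} (hA : A.IsSymm) (b w d : ι → R) :
    quadObjective A b (w + d) =
      quadObjective A b w + 2 * (d ⬝ᵥ (A *ᵥ w - b)) + d ⬝ᵥ A *ᵥ d := by
  have hcross : w ⬝ᵥ A *ᵥ d = d ⬝ᵥ A *ᵥ w := by
    rw [dotProduct_mulVec, ← mulVec_transpose, hA.eq, dotProduct_comm]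
  simp only [quadObjective, mulVec_add, dotProduct_add, add_dotProduct, dotProduct_sub, hcross,
    dotProduct_comm b d]
  ring

theorem dotProduct_self_sub_vecMul {κ : Type*} [Fintype κ] (H : Matrix ι κ R) (x : κ → R)
    (w : ι → R) :
    (x - w ᵥ* H) ⬝ᵥ (x - w ᵥ* H) = x ⬝ᵥ x + quadObjective (H * Hᵀ) (H *ᵥ x) w := by
  have hlin : x ⬝ᵥ w ᵥ* H = (H *ᵥ x) ⬝ᵥ w := by
    rw [dotProduct_comm, ← dotProduct_mulVec, dotProduct_comm]
  have hquad : w ⬝ᵥ (H * Hᵀ) *ᵥ w = (w ᵥ* H) ⬝ᵥ (w ᵥ* H) := by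
    rw [← mulVec_mulVec, dotProduct_mulVec, mulVec_transpose]
  simp only [quadObjective, hquad, ← hlin, sub_dotProduct, dotProduct_sub,
    dotProduct_comm (w ᵥ* H) x]
  ring

variable [LinearOrder R] [IsStrictOrderedRing R]

-- Symmetrizing in the two indices reduces this to `2 * (d i * d j) ≤ d i ^ 2 + d j ^ 2`.
theorem dotProduct_mulVec_mul_self_le {A : Matrix ι ι R} (hA : A.IsSymm) (hA₀ : ∀ i j, 0 ≤ A i j)
    {w : ι → R} (hw : 0 ≤ w) (d : ι → R) :
    (w * d) ⬝ᵥ A *ᵥ (w * d) ≤ (w * d ^ 2) ⬝ᵥ A *ᵥ w := by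
  have hlhs : (w * d) ⬝ᵥ A *ᵥ (w * d) = ∑ i, ∑ j, w i * A i j * w j * (d i * d j) := by
    simp only [dotProduct, mulVec, Pi.mul_apply, Finset.mul_sum]
    exact Finset.sum_congr rfl fun i _ => Finset.sum_congr rfl fun j _ => by ring
  have hrhs : (w * d ^ 2) ⬝ᵥ A *ᵥ w = ∑ i, ∑ j, w i * A i j * w j * d i ^ 2 := by
    simp only [dotProduct, mulVec, Pi.mul_apply, Pi.pow_apply, Finset.mul_sum]
    exact Finset.sum_congr rfl fun i _ => Finset.sum_congr rfl fun j _ => by ring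
  have hswap : ∑ i, ∑ j, w i * A i j * w j * d i ^ 2 =
      ∑ i, ∑ j, w i * A i j * w j * d j ^ 2 := by
    rw [Finset.sum_comm]
    exact Finset.sum_congr rfl fun i _ => Finset.sum_congr rfl fun j _ => by
      rw [hA.apply i j]; ring
  have hamgm : 2 * ∑ i, ∑ j, w i * A i j * w j * (d i * d j) ≤
      ∑ i, ∑ j, w i * A i j * w j * d i ^ 2 + ∑ i, ∑ j, w i * A i j * w j * d j ^ 2 := by
    simp only [Finset.mul_sum, ← Finset.sum_add_distrib]
    refine Finset.sum_le_sum fun i _ => Finset.sum_le_sum fun j _ => ?_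
    have hcoeff : 0 ≤ w i * A i j * w j := mul_nonneg (mul_nonneg (hw i) (hA₀ i j)) (hw j)
    linarith [mul_le_mul_of_nonneg_left (two_mul_le_add_sq (d i) (d j)) hcoeff]
  rw [hlhs, hrhs]
  linarith

theorem quadObjective_mul_le {A : Matrix ι ι R} (hA : A.IsSymm) (hA₀ : ∀ i j, 0 ≤ A i j)
    {b w ρ : ι → R} (hw : 0 ≤ w) (hρ : ρ * A *ᵥ w = b) :
    quadObjective A b (w * ρ) ≤ quadObjective A b w := by
  set d := ρ - 1 with hd
  have hstep : w * ρ = w + w * d := by rw [hd]; ring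
  have hgrad : (w * d) ⬝ᵥ (A *ᵥ w - b) = -((w * d ^ 2) ⬝ᵥ A *ᵥ w) := by
    rw [← dotProduct_neg, ← hρ, hd]
    simp only [dotProduct, Pi.mul_apply, Pi.sub_apply, Pi.pow_apply, Pi.neg_apply, Pi.one_apply]
    exact Finset.sum_congr rfl fun i _ => by ring
  have hcurv : 0 ≤ (w * d ^ 2) ⬝ᵥ A *ᵥ w :=
    dotProduct_nonneg_of_nonneg (fun i => mul_nonneg (hw i) (sq_nonneg (d i)))
      fun i => dotProduct_nonneg_of_nonneg (hA₀ i) hw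
  calc quadObjective A b (w * ρ)
      = quadObjective A b w - 2 * ((w * d ^ 2) ⬝ᵥ A *ᵥ w) + (w * d) ⬝ᵥ A *ᵥ (w * d) := by
        rw [hstep, quadObjective_add hA, hgrad]; ring
    _ ≤ quadObjective A b w := by
        linarith [dotProduct_mulVec_mul_self_le hA hA₀ hw d]

end QuadraticObjective

section MultiplicativeUpdate

variable {m n r R : Type*} [Fintype n] [Fintype r] [CommRing R] [LinearOrder R]
  [IsStrictOrderedRing R]

theorem dotProduct_self_sub_vecMul_mul_le {H : Matrix r n R} (hH : ∀ i j, 0 ≤ H i j) {x : n → R}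
    {w ρ : r → R} (hw : 0 ≤ w) (hρ : ρ * (H * Hᵀ) *ᵥ w = H *ᵥ x) :
    (x - (w * ρ) ᵥ* H) ⬝ᵥ (x - (w * ρ) ᵥ* H) ≤ (x - w ᵥ* H) ⬝ᵥ (x - w ᵥ* H) := by
  have hsymm : (H * Hᵀ).IsSymm := by rw [IsSymm, transpose_mul, transpose_transpose]
  have hnonneg : ∀ i j, 0 ≤ (H * Hᵀ) i j := fun i j => dotProduct_nonneg_of_nonneg (hH i) (hH j)
  simp only [dotProduct_self_sub_vecMul]
  gcongr
  exact quadObjective_mul_le hsymm hnonneg hw hρ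

theorem mul_mul_transpose_apply_pos {W : Matrix m r R} {H : Matrix r n R} {a : m} {b : r}
    (hW : ∀ c, 0 ≤ W a c) (hWab : 0 < W a b) (hH : ∀ i j, 0 ≤ H i j) (hHb : H b ≠ 0) :
    0 < (W * H * Hᵀ) a b := by
  have hself : 0 < H b ⬝ᵥ H b :=
    (dotProduct_nonneg_of_nonneg (hH b) (hH b)).lt_of_ne' (dotProduct_self_eq_zero.not.mpr hHb)
  have hterm : ∀ j, W a b * H b j ≤ (W * H) a j := fun j =>
    Finset.single_le_sum (f := fun c => W a c * H c j)
      (fun c _ => mul_nonneg (hW c) (hH c j)) (Finset.mem_univ b)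
  calc 0 < W a b * (H b ⬝ᵥ H b) := mul_pos hWab hself
    _ = (fun j => W a b * H b j) ⬝ᵥ H b := (smul_dotProduct (W a b) (H b) (H b)).symm
    _ ≤ (W * H * Hᵀ) a b := dotProduct_le_dotProduct_of_nonneg_right hterm (hH b)

-- A zero row `b` of `H` makes the quotient `0 / 0`, but then `W' a b` does not affect `W' * H`.
theorem dspnmf_W_update_nonincreasing_general [Fintype m] {K : Type*} [Field K] [LinearOrder K]
    [IsStrictOrderedRing K] (X : Matrix m n K) {W : Matrix m r K} {H : Matrix r n K}
    (hW : ∀ a b, 0 ≤ W a b) (hH : ∀ i j, 0 ≤ H i j)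
    (hden : ∀ a b, H b ≠ 0 → (W * H * Hᵀ) a b ≠ 0) {W' : Matrix m r K}
    (hW' : ∀ a b, W' a b = W a b * (X * Hᵀ) a b / (W * H * Hᵀ) a b) :
    ∑ i, ∑ j, (X - W' * H) i j ^ 2 ≤ ∑ i, ∑ j, (X - W * H) i j ^ 2 := by
  refine Finset.sum_le_sum fun a _ => ?_
  let ρ : r → K := fun b => (X * Hᵀ) a b / (W * H * Hᵀ) a b
  have hrow : W' a = W a * ρ := funext fun b => (hW' a b).trans (mul_div_assoc _ _ _)
  have hgram : (H * Hᵀ) *ᵥ W a = (W * H * Hᵀ) a := by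
    rw [mul_apply_eq_vecMul, mul_apply_eq_vecMul, vecMul_transpose, ← mulVec_transpose,
      mulVec_mulVec]
  have hnum : H *ᵥ X a = (X * Hᵀ) a := by rw [mul_apply_eq_vecMul, vecMul_transpose]
  have hρ : ρ * (H * Hᵀ) *ᵥ W a = H *ᵥ X a := by
    rw [hgram, hnum]
    ext b
    by_cases hb : H b = 0
    · simp [mul_apply, hb]
    · exact div_mul_cancel₀ _ (hden a b hb)
  have herr := dotProduct_self_sub_vecMul_mul_le hH (hW a) hρ
  rw [← hrow, ← mul_apply_eq_vecMul, ← mul_apply_eq_vecMul] at herr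
  simpa only [dotProduct, Pi.sub_apply, Matrix.sub_apply, sq] using herr

end MultiplicativeUpdate

/-- The Frobenius reconstruction error is non-increasing under the
multiplicative update of the basis matrix `W`. -/
theorem dspnmf_W_update_nonincreasing {m n r : ℕ}
    (X : Matrix (Fin m) (Fin n) ℝ) (W : Matrix (Fin m) (Fin r) ℝ)
    (H : Matrix (Fin r) (Fin n) ℝ)
    (hX : ∀ i j, 0 < X i j) (hW : ∀ i j, 0 < W i j) (hH : ∀ i j, 0 < H i j)
    (W' : Matrix (Fin m) (Fin r) ℝ)
    (hW' : ∀ a b, W' a b = W a b * (X * Hᵀ) a b / (W * H * Hᵀ) a b) :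
    frobSq (X - W' * H) ≤ frobSq (X - W * H) :=
  have hH₀ := fun i j => (hH i j).le
  dspnmf_W_update_nonincreasing_general X (fun a b => (hW a b).le) hH₀
    (fun a b hb => (mul_mul_transpose_apply_pos (fun c => (hW a c).le) (hW a b) hH₀ hb).ne') hW'
end
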